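/- Exhaustive blocked clause elimination is symmetry-preserving: if F* is obtained from a CNF formula F by exhaustively removing blocked clauses, then Aut_syn(F)_{{Lit(F*)}} = Aut_syn(F) and Aut_syn(F)↓_{Lit(F*)} ⊆ Aut_syn(F*). -/

import Mathlib

/-- A literal over a variable type `V`: a variable or its negation. -/
inductive Lit (V : Type) where
  | pos : V → Lit V
  | neg : V → Lit V
deriving DecidableEq

variable {V : Type} [DecidableEq V]

/-- Negation of a literal (so that double negation is the identity). -/
def Lit.negate : Lit V → Lit V
  | .pos v => .neg v
  | .neg v => .pos v

/-- The underlying variable of a literal. -/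
def Lit.var : Lit V → V
  | .pos v => v
  | .neg v => v

/-- A clause is a finite set of literals. -/
abbrev Clause (V : Type) := Finset (Lit V)

/-- A CNF formula is a finite set of clauses. -/
abbrev CNF (V : Type) := Finset (Clause V)

/-- `Var(F)`: the variables occurring in a formula. -/
def CNF.vars (F : CNF V) : Finset V := Finset.sup F (fun C => Finset.image Lit.var C)

/-- `Lit(F) = Var(F) ∪ {v̄ : v ∈ Var(F)}`. -/
def CNF.lits (F : CNF V) : Finset (Lit V) :=
  Finset.image Lit.pos (CNF.vars F) ∪ Finset.image Lit.neg (CNF.vars F)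

/-- The value of a literal under a complete assignment (given on the variables,
which determines a consistent complete assignment on all literals). -/
def Lit.val (σ : V → Bool) : Lit V → Bool
  | .pos v => σ v
  | .neg v => !(σ v)

/-- `C[σ]`: delete from `C` every literal mapped to `⊥` by `σ`
(i.e. keep `l` with `¬l ∉ σ`). -/
def Clause.reduce (σ : V → Bool) (C : Clause V) : Clause V :=
  Finset.filter (fun l => Lit.val σ (Lit.negate l) = false) C

/-- `F[σ]`: delete every clause containing a literal mapped to `⊤` by `σ`
(for a complete assignment: every clause containing no false literal is kept)
and delete from each remaining clause every literal mapped to `⊥`. -/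
def CNF.reduce (F : CNF V) (σ : V → Bool) : CNF V :=
  Finset.image (Clause.reduce σ) (Finset.filter (fun C => ∀ l ∈ C, Lit.val σ l = false) F)

/-- Apply a map on literals elementwise to clauses and formulas. -/
def CNF.map (φ : Lit V → Lit V) (F : CNF V) : CNF V :=
  Finset.image (fun C => Finset.image φ C) F

/-- `φ` is a syntactic symmetry of `F`: a bijection of `Lit(F)` respecting
negation with `φ(F) = F`. -/
def IsSynSym (F : CNF V) (φ : Lit V → Lit V) : Prop :=
  Set.BijOn φ (CNF.lits F : Set (Lit V)) (CNF.lits F : Set (Lit V)) ∧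
  (∀ l ∈ CNF.lits F, φ (Lit.negate l) = Lit.negate (φ l)) ∧
  CNF.map φ F = F

/-- `φ` is a semantic symmetry of `F`: a bijection of `Lit(F)` respecting
negation with `F[σ] = φ(F)[σ]` for every complete assignment `σ`. -/
def IsSemSym (F : CNF V) (φ : Lit V → Lit V) : Prop :=
  Set.BijOn φ (CNF.lits F : Set (Lit V)) (CNF.lits F : Set (Lit V)) ∧
  (∀ l ∈ CNF.lits F, φ (Lit.negate l) = Lit.negate (φ l)) ∧
  ∀ σ : V → Bool, CNF.reduce F σ = CNF.reduce (CNF.map φ F) σ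

/-- Extend a map defined on the literal set `S` by the identity outside `S`. -/
def extendId (S : Finset (Lit V)) (φ : Lit V → Lit V) : Lit V → Lit V :=
  fun l => if l ∈ S then φ l else l

/-- `F[l ↦ ⊤]`: delete every clause containing `l` and delete `l̄` from every
remaining clause. -/
def CNF.assignTrue (F : CNF V) (l : Lit V) : CNF V :=
  Finset.image (fun C => Finset.erase C (Lit.negate l)) (Finset.filter (fun C => l ∉ C) F)

/-- A clause is a tautology if it contains some literal with its negation. -/
def IsTaut (C : Clause V) : Prop := ∃ l ∈ C, Lit.negate l ∈ C

/-- `l ∈ C` blocks `C` in `F`: every resolvent of `C` on `l` with a clause of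
`F` containing `l̄` is a tautology. -/
def Blocks (F : CNF V) (l : Lit V) (C : Clause V) : Prop :=
  l ∈ C ∧ ∀ C' ∈ F, Lit.negate l ∈ C' → IsTaut (C.erase l ∪ C'.erase (Lit.negate l))

/-- One application of blocked clause elimination: remove a blocked clause. -/
def BCEStep (F F' : CNF V) : Prop :=
  ∃ C ∈ F, (∃ l : Lit V, Blocks F l C) ∧ F' = F.erase C

theorem Lit.negate_negate' (l : Lit V) : l.negate.negate = l := by
  cases l <;> rfl

theorem mem_lits_iff (G : CNF V) (l : Lit V) :
    l ∈ CNF.lits G ↔ ∃ C ∈ G, l ∈ C ∨ l.negate ∈ C := by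
  have hv : ∀ v, v ∈ CNF.vars G ↔ ∃ C ∈ G, Lit.pos v ∈ C ∨ Lit.neg v ∈ C := by
    intro v
    simp only [CNF.vars, Finset.mem_sup, Finset.mem_image]
    constructor
    · rintro ⟨C, hC, m, hm, rfl⟩
      refine ⟨C, hC, ?_⟩
      cases m
      · exact Or.inl hm
      · exact Or.inr hm
    · rintro ⟨C, hC, h | h⟩
      · exact ⟨C, hC, _, h, rfl⟩
      · exact ⟨C, hC, _, h, rfl⟩
  cases l with
  | pos v => simp [CNF.lits, hv, Lit.negate]
  | neg v => simp [CNF.lits, hv, Lit.negate, or_comm]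

theorem mem_lits_of_mem {G : CNF V} {C : Clause V} {l : Lit V} (hC : C ∈ G) (hl : l ∈ C) :
    l ∈ CNF.lits G := (mem_lits_iff G l).2 ⟨C, hC, Or.inl hl⟩

theorem negate_mem_lits {G : CNF V} {l : Lit V} (hl : l ∈ CNF.lits G) :
    l.negate ∈ CNF.lits G := by
  obtain ⟨C, hC, h⟩ := (mem_lits_iff G l).1 hl
  exact (mem_lits_iff G _).2 ⟨C, hC, by rw [Lit.negate_negate']; exact h.symm⟩

theorem lits_mono {G F : CNF V} (h : G ⊆ F) : CNF.lits G ⊆ CNF.lits F := by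
  intro l hl
  obtain ⟨C, hC, h'⟩ := (mem_lits_iff G l).1 hl
  exact (mem_lits_iff F l).2 ⟨C, h hC, h'⟩

theorem core_subset {F Fs G : CNF V} (hsteps : Relation.ReflTransGen BCEStep F Fs)
    (hG : G ⊆ F) (hd : ¬ ∃ C ∈ G, ∃ l : Lit V, Blocks G l C) : G ⊆ Fs := by
  induction hsteps with
  | refl => exact hG
  | tail _ hstep ih =>
    obtain ⟨C, _, ⟨l, hl, hb⟩, rfl⟩ := hstep
    refine Finset.subset_erase.2 ⟨ih, fun hCG => hd ⟨C, hCG, l, hl, fun C' hC' => hb C' (ih hC')⟩⟩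

theorem steps_subset {F Fs : CNF V} (hsteps : Relation.ReflTransGen BCEStep F Fs) : Fs ⊆ F := by
  induction hsteps with
  | refl => exact subset_rfl
  | tail _ hstep ih =>
    obtain ⟨C, _, _, rfl⟩ := hstep
    exact (Finset.erase_subset _ _).trans ih

theorem map_unblocked {G : CNF V} {φ : Lit V → Lit V}
    (hinj : Set.InjOn φ (CNF.lits G : Set (Lit V)))
    (hneg : ∀ l ∈ CNF.lits G, φ (Lit.negate l) = Lit.negate (φ l))
    (hd : ¬ ∃ C ∈ G, ∃ l : Lit V, Blocks G l C) :
    ¬ ∃ C ∈ CNF.map φ G, ∃ l : Lit V, Blocks (CNF.map φ G) l C := by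
  rintro ⟨D, hD, m, hm, hb⟩
  obtain ⟨C, hC, rfl⟩ := Finset.mem_image.1 hD
  obtain ⟨l, hl, rfl⟩ := Finset.mem_image.1 hm
  refine hd ⟨C, hC, l, hl, fun C' hC' hl' => ?_⟩
  have hlG := mem_lits_of_mem hC hl
  have key : ∀ p ∈ (C.image φ).erase (φ l) ∪ (C'.image φ).erase (Lit.negate (φ l)),
      ∃ q ∈ C.erase l ∪ C'.erase l.negate, q ∈ CNF.lits G ∧ φ q = p := by
    intro p hp
    rcases Finset.mem_union.1 hp with h | h
    · obtain ⟨h1, h2⟩ := Finset.mem_erase.1 h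
      obtain ⟨q, hq, rfl⟩ := Finset.mem_image.1 h2
      exact ⟨q, Finset.mem_union_left _ (Finset.mem_erase.2 ⟨fun e => h1 (e ▸ rfl), hq⟩),
        mem_lits_of_mem hC hq, rfl⟩
    · obtain ⟨h1, h2⟩ := Finset.mem_erase.1 h
      obtain ⟨q, hq, rfl⟩ := Finset.mem_image.1 h2
      exact ⟨q, Finset.mem_union_right _ (Finset.mem_erase.2
        ⟨fun e => h1 (by rw [e, hneg l hlG]), hq⟩), mem_lits_of_mem hC' hq, rfl⟩
  obtain ⟨p, hp, hp'⟩ := hb (C'.image φ) (Finset.mem_image_of_mem _ hC')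
    (by rw [← hneg l hlG]; exact Finset.mem_image_of_mem _ hl')
  obtain ⟨q, hq, hqG, rfl⟩ := key p hp
  obtain ⟨r, hr, hrG, hqr⟩ := key _ hp'
  rw [← hneg q hqG] at hqr
  have : r = q.negate := hinj hrG (negate_mem_lits hqG) hqr
  exact ⟨q, hq, this ▸ hr⟩

theorem lits_map {G : CNF V} {φ : Lit V → Lit V}
    (hneg : ∀ l ∈ CNF.lits G, φ (Lit.negate l) = Lit.negate (φ l)) :
    φ '' (CNF.lits G : Set (Lit V)) = (CNF.lits (CNF.map φ G) : Set (Lit V)) := by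
  ext m
  constructor
  · rintro ⟨l, hl, rfl⟩
    have hl : l ∈ CNF.lits G := hl
    obtain ⟨C, hC, h⟩ := (mem_lits_iff G l).1 hl
    refine (mem_lits_iff _ _).2 ⟨C.image φ, Finset.mem_image_of_mem _ hC, ?_⟩
    rw [← hneg l hl]
    exact h.imp (Finset.mem_image_of_mem _) (Finset.mem_image_of_mem _)
  · intro hm
    obtain ⟨D, hD, h⟩ := (mem_lits_iff _ _).1 (show m ∈ CNF.lits (CNF.map φ G) from hm)
    obtain ⟨C, hC, rfl⟩ := Finset.mem_image.1 hD
    rcases h with h | h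
    · obtain ⟨l, hl, rfl⟩ := Finset.mem_image.1 h
      exact ⟨l, mem_lits_of_mem hC hl, rfl⟩
    · obtain ⟨l, hl, e⟩ := Finset.mem_image.1 h
      have hG := mem_lits_of_mem hC hl
      exact ⟨l.negate, negate_mem_lits hG, by rw [hneg l hG, e, Lit.negate_negate']⟩

theorem map_core_eq {F Fs : CNF V}
    (hsteps : Relation.ReflTransGen BCEStep F Fs)
    (hdone : ¬ ∃ C ∈ Fs, ∃ l : Lit V, Blocks Fs l C)
    {φ : Lit V → Lit V} (h : IsSynSym F φ) :
    CNF.map φ Fs = Fs := by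
  obtain ⟨hbij, hneg, hmap⟩ := h
  have hsub := steps_subset hsteps
  have hl := lits_mono hsub
  have hinj : Set.InjOn φ (CNF.lits Fs : Set (Lit V)) :=
    hbij.injOn.mono (Finset.coe_subset.2 hl)
  have h1 : CNF.map φ Fs ⊆ F := by
    conv_rhs => rw [← hmap]
    exact Finset.image_subset_image hsub
  have h2 : CNF.map φ Fs ⊆ Fs :=
    core_subset hsteps h1 (map_unblocked hinj (fun l hl' => hneg l (hl hl')) hdone)
  refine Finset.eq_of_subset_of_card_le h2 (le_of_eq (Finset.card_image_of_injOn ?_).symm)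
  have aux : ∀ C ∈ Fs, ∀ D ∈ Fs, C.image φ = D.image φ → C ⊆ D := by
    intro C hC D hD e l hlC
    have : φ l ∈ D.image φ := e ▸ Finset.mem_image_of_mem φ hlC
    obtain ⟨r, hr, hrl⟩ := Finset.mem_image.1 this
    have := hinj (mem_lits_of_mem hD hr) (mem_lits_of_mem hC hlC) hrl
    exact this ▸ hr
  intro C hC D hD e
  exact Finset.Subset.antisymm (aux C hC D hD e) (aux D hD C hC e.symm)

/-- Exhaustive blocked clause elimination is
symmetry-preserving: if `F*` is obtained from `F` by exhaustively removing
blocked clauses, then every syntactic symmetry of `F` setwise stabilizes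
`Lit(F*)` (so `Aut_syn(F)_{{Lit(F*)}} = Aut_syn(F)`) and its restriction to
`Lit(F*)` is a syntactic symmetry of `F*`
(so `Aut_syn(F)↓_{Lit(F*)} ⊆ Aut_syn(F*)`). -/
theorem exhaustive_bce_symmetry_preserving (F Fs : CNF V)
    (hsteps : Relation.ReflTransGen BCEStep F Fs)
    (hdone : ¬ ∃ C ∈ Fs, ∃ l : Lit V, Blocks Fs l C) :
    (∀ φ : Lit V → Lit V, IsSynSym F φ →
        φ '' (CNF.lits Fs : Set (Lit V)) = (CNF.lits Fs : Set (Lit V))) ∧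
    (∀ φ : Lit V → Lit V, IsSynSym F φ →
        φ '' (CNF.lits Fs : Set (Lit V)) = (CNF.lits Fs : Set (Lit V)) →
        IsSynSym Fs φ) := by
  refine ⟨fun φ h => ?_, fun φ h him => ?_⟩
  · rw [lits_map (fun l hl => h.2.1 l (lits_mono (steps_subset hsteps) hl)),
      map_core_eq hsteps hdone h]
  · have hl := lits_mono (steps_subset hsteps)
    refine ⟨⟨?_, h.1.injOn.mono (Finset.coe_subset.2 hl), him.ge⟩,
      fun l hl' => h.2.1 l (hl hl'), map_core_eq hsteps hdone h⟩
    exact Set.mapsTo_iff_image_subset.2 him.le
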